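/- Let p, q ∈ ℝ^d be probability vectors with strictly positive entries, and for n ∈ ℕ let p^{⊗n}, q^{⊗n} ∈ ℝ^{d^n} denote their n-fold tensor powers. Define the smoothed min-divergence D_0^ε(p^{⊗n} ‖ q^{⊗n}) = sup { D_0(p̃ ‖ q^{⊗n}) : p̃ a probability vector on d^n outcomes with d(p̃, p^{⊗n}) ≤ ε }, where D_0(p̃‖Q) = −ln ∑_{i: p̃_i > 0} Q_i. Then lim_{ε→0^+} lim_{n→∞} (1/n) D_0^ε(p^{⊗n} ‖ q^{⊗n}) = D_1(p ‖ q) = ∑_i p_i ln(p_i/q_i). -/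

import Mathlib

open scoped BigOperators Topology
open Filter

/-- A probability vector: nonnegative entries summing to 1. -/
def IsProbVec {ι : Type*} [Fintype ι] (p : ι → ℝ) : Prop :=
  (∀ i, 0 ≤ p i) ∧ ∑ i, p i = 1

/-- The sum of the `k` largest entries of `p`, as the supremum of sums over subsets of size `k`. -/
noncomputable def topSum {ι : Type*} [Fintype ι] (p : ι → ℝ) (k : ℕ) : ℝ :=
  sSup {x : ℝ | ∃ s : Finset ι, s.card = k ∧ x = ∑ i ∈ s, p i}

/-- `p` majorizes `p'`: for every `1 ≤ k ≤ d`, the sum of the `k` largest entries of `p`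
is at least that of `p'`. -/
def Majorizes {ι : Type*} [Fintype ι] (p p' : ι → ℝ) : Prop :=
  ∀ k : ℕ, 1 ≤ k → k ≤ Fintype.card ι → topSum p' k ≤ topSum p k

/-- A column-stochastic matrix: nonnegative entries, each column sums to 1. -/
def ColStochastic {ι κ : Type*} [Fintype ι] [Fintype κ] (Λ : Matrix ι κ ℝ) : Prop :=
  (∀ i j, 0 ≤ Λ i j) ∧ ∀ j, ∑ i, Λ i j = 1

/-- A bistochastic (doubly stochastic) matrix. -/
def Bistochastic {ι : Type*} [Fintype ι] (A : Matrix ι ι ℝ) : Prop :=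
  (∀ i j, 0 ≤ A i j) ∧ (∀ i, ∑ j, A i j = 1) ∧ (∀ j, ∑ i, A i j = 1)

/-- Real power with the convention `0 ^ a = 0` (in particular `0 ^ 0 = 0`). -/
noncomputable def rpow0 (x a : ℝ) : ℝ := if x = 0 then 0 else x ^ a

/-- The classical Rényi divergence `D_α(p‖q)`, with the conventions `0^0 = 0`, `0·ln 0 = 0`;
for `α < 0` the prefactor is `1/(1-α)`, for `α ∈ [0,1)∪(1,∞)` it is `1/(α-1)`,
and `D_1` is the Kullback–Leibler divergence. -/
noncomputable def renyiD {ι : Type*} [Fintype ι] (α : ℝ) (p q : ι → ℝ) : ℝ :=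
  if α = 1 then ∑ i, p i * Real.log (p i / q i)
  else if α < 0 then (1 / (1 - α)) * Real.log (∑ i, rpow0 (p i) α * rpow0 (q i) (1 - α))
  else (1 / (α - 1)) * Real.log (∑ i, rpow0 (p i) α * rpow0 (q i) (1 - α))

/-- The Rényi entropy `H_α(p) = (sgn α / (1-α)) ln ∑ p_i^α`, with `H_1` the Shannon entropy. -/
noncomputable def renyiH {ι : Type*} [Fintype ι] (α : ℝ) (p : ι → ℝ) : ℝ :=
  if α = 1 then -∑ i, p i * Real.log (p i)
  else ((if 0 ≤ α then (1 : ℝ) else -1) / (1 - α)) * Real.log (∑ i, rpow0 (p i) α)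

/-- Trace (total variation) distance between probability vectors. -/
noncomputable def traceDist {ι : Type*} [Fintype ι] (p p' : ι → ℝ) : ℝ :=
  (1 / 2) * ∑ i, |p i - p' i|

/-- Tensor product of two vectors: `(p ⊗ r)_{(i,j)} = p_i r_j`. -/
def tensorVec {ι κ : Type*} (p : ι → ℝ) (r : κ → ℝ) : ι × κ → ℝ :=
  fun x => p x.1 * r x.2

/-- The `n`-fold tensor power of `p`: `(p^{⊗n})_{(i₁,…,iₙ)} = p_{i₁}⋯p_{iₙ}`. -/
def tensorPow {d : ℕ} (p : Fin d → ℝ) (n : ℕ) : (Fin n → Fin d) → ℝ :=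
  fun f => ∏ k, p (f k)

/-- Max-relative entropy `D_∞(p̃‖Q) = ln max_i (p̃_i / Q_i)`. -/
noncomputable def Dmax {ι : Type*} [Fintype ι] (pt Q : ι → ℝ) : ℝ :=
  Real.log (sSup (Set.range fun i => pt i / Q i))

/-- Min-relative entropy `D_0(p̃‖Q) = −ln ∑_{i : p̃_i > 0} Q_i`. -/
noncomputable def Dmin {ι : Type*} [Fintype ι] (pt Q : ι → ℝ) : ℝ :=
  -Real.log (∑ i ∈ Finset.univ.filter (fun i => 0 < pt i), Q i)

/-- Smoothed max-divergence `D_∞^ε(p^{⊗n}‖q^{⊗n})`: infimum of `D_∞(p̃‖q^{⊗n})` over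
probability vectors `p̃` within trace distance `ε` of `p^{⊗n}`. -/
noncomputable def DmaxSmooth {d : ℕ} (ε : ℝ) (n : ℕ) (p q : Fin d → ℝ) : ℝ :=
  sInf {x : ℝ | ∃ pt : (Fin n → Fin d) → ℝ,
    IsProbVec pt ∧ traceDist pt (tensorPow p n) ≤ ε ∧ x = Dmax pt (tensorPow q n)}

/-- Smoothed min-divergence `D_0^ε(p^{⊗n}‖q^{⊗n})`: supremum of `D_0(p̃‖q^{⊗n})` over
probability vectors `p̃` within trace distance `ε` of `p^{⊗n}`. -/
noncomputable def DminSmooth {d : ℕ} (ε : ℝ) (n : ℕ) (p q : Fin d → ℝ) : ℝ :=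
  sSup {x : ℝ | ∃ pt : (Fin n → Fin d) → ℝ,
    IsProbVec pt ∧ traceDist pt (tensorPow p n) ≤ ε ∧ x = Dmin pt (tensorPow q n)}

/-!
For `0 < ε < 1` the inner limit already equals `D = D_1(p‖q)`, by the Neyman–Pearson argument. The
log-likelihood ratio of `p^{⊗n}` against `q^{⊗n}` is a sum of `n` i.i.d. terms of mean `D`, so by
Chebyshev's inequality almost all of the mass of `p^{⊗n}` lies on the sequences where
`p^{⊗n} / q^{⊗n} = exp (n (D ± δ))`. Conditioning `p^{⊗n}` on this typical set costs less than `ε`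
in trace distance and leaves a support of `q^{⊗n}`-mass at most `exp (-n (D - δ))`. Conversely, the
support of every vector `ε`-close to `p^{⊗n}` has `p^{⊗n}`-mass at least `1 - ε`, hence meets the
typical set in `p^{⊗n}`-mass at least `(1 - ε) / 2`, which forces `q^{⊗n}`-mass at least
`exp (-n (D + δ)) (1 - ε) / 2`. For `1 ≤ ε` every probability vector competes, and the point mass
at the sequence of least `q^{⊗n}`-mass gives the rate `-log (min q)`.
-/

section ProbVec

variable {ι : Type*} [Fintype ι] {P P' : ι → ℝ}

lemma IsProbVec.nonempty (hP : IsProbVec P) : Nonempty ι := by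
  by_contra hι
  rw [not_nonempty_iff] at hι
  simpa using hP.2

lemma IsProbVec.sum_le_one (hP : IsProbVec P) (s : Finset ι) : ∑ i ∈ s, P i ≤ 1 :=
  hP.2 ▸ Finset.sum_le_univ_sum_of_nonneg hP.1

lemma IsProbVec.sum_filter_pos (hP : IsProbVec P) : ∑ i with 0 < P i, P i = 1 := by
  rw [← hP.2]
  refine Finset.sum_subset (Finset.filter_subset _ _) fun i _ hi ↦ ?_
  exact le_antisymm (by simpa using hi) (hP.1 i)

lemma IsProbVec.exists_pos (hP : IsProbVec P) : ∃ i, 0 < P i := by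
  by_contra! h
  linarith [hP.2, Finset.sum_nonpos fun i (_ : i ∈ Finset.univ) ↦ h i]

lemma isProbVec_pi_single [DecidableEq ι] (i : ι) : IsProbVec (Pi.single i (1 : ℝ)) :=
  ⟨(Pi.single_nonneg.2 zero_le_one : (0 : ι → ℝ) ≤ Pi.single i 1), by simp⟩

lemma traceDist_self (P : ι → ℝ) : traceDist P P = 0 := by simp [traceDist]

lemma traceDist_le_one (hP : IsProbVec P) (hP' : IsProbVec P') : traceDist P P' ≤ 1 := by
  have h : ∑ i, |P i - P' i| ≤ ∑ i, (P i + P' i) := Finset.sum_le_sum fun i _ ↦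
    abs_le.2 ⟨by linarith [hP.1 i], by linarith [hP'.1 i]⟩
  rw [Finset.sum_add_distrib, hP.2, hP'.2] at h
  unfold traceDist
  linarith

lemma sum_sub_sum_le_traceDist (h : ∑ i, P i = ∑ i, P' i) (s : Finset ι) :
    ∑ i ∈ s, P i - ∑ i ∈ s, P' i ≤ traceDist P P' := by
  classical
  have hs : ∑ i ∈ s, (P i - P' i) ≤ ∑ i ∈ s, |P i - P' i| :=
    Finset.sum_le_sum fun _ _ ↦ le_abs_self _
  have hsc : ∑ i ∈ sᶜ, (P' i - P i) ≤ ∑ i ∈ sᶜ, |P i - P' i| :=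
    Finset.sum_le_sum fun _ _ ↦ neg_sub (P _) (P' _) ▸ neg_le_abs _
  simp only [Finset.sum_sub_distrib] at hs hsc
  rw [traceDist, ← Finset.sum_add_sum_compl s]
  linarith [Finset.sum_add_sum_compl s P, Finset.sum_add_sum_compl s P']

end ProbVec

section CondVec

open Classical in
/-- The conditional distribution `P(· | s)`; it is the zero vector when `∑ i ∈ s, P i = 0`. -/
noncomputable def condVec {ι : Type*} (P : ι → ℝ) (s : Finset ι) (i : ι) : ℝ :=
  if i ∈ s then P i / ∑ j ∈ s, P j else 0

lemma mem_of_condVec_pos {ι : Type*} {P : ι → ℝ} {s : Finset ι} {i : ι}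
    (hi : 0 < condVec P s i) : i ∈ s := by
  by_contra h
  simp [condVec, h] at hi

variable {ι : Type*} [Fintype ι] {P : ι → ℝ} {s : Finset ι}

lemma isProbVec_condVec (hP : ∀ i, 0 ≤ P i) (hs : 0 < ∑ i ∈ s, P i) :
    IsProbVec (condVec P s) := by
  refine ⟨fun i ↦ ?_, ?_⟩
  · unfold condVec
    split_ifs
    exacts [div_nonneg (hP i) hs.le, le_rfl]
  · simp [condVec, Finset.sum_ite_mem, ← Finset.sum_div, hs.ne']

lemma traceDist_condVec (hP : IsProbVec P) (hs : 0 < ∑ i ∈ s, P i) :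
    traceDist (condVec P s) P = 1 - ∑ i ∈ s, P i := by
  classical
  have h_in : ∑ i ∈ s, |condVec P s i - P i| = 1 - ∑ i ∈ s, P i := by
    have h : ∀ i ∈ s, |condVec P s i - P i| = P i / (∑ j ∈ s, P j) - P i := fun i hi ↦ by
      rw [condVec, if_pos hi, abs_of_nonneg]
      exact sub_nonneg.2 (le_div_self (hP.1 i) hs (hP.sum_le_one s))
    rw [Finset.sum_congr rfl h, Finset.sum_sub_distrib, ← Finset.sum_div, div_self hs.ne']
  have h_out : ∑ i ∈ sᶜ, |condVec P s i - P i| = ∑ i ∈ sᶜ, P i :=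
    Finset.sum_congr rfl fun i hi ↦ by
      simp [condVec, Finset.mem_compl.1 hi, abs_of_nonneg (hP.1 i)]
  rw [traceDist, ← Finset.sum_add_sum_compl s, h_in, h_out]
  linarith [Finset.sum_add_sum_compl s P, hP.2]

end CondVec

section Dmin

variable {ι : Type*} [Fintype ι] {P P' Q : ι → ℝ} {a b c ε : ℝ} {s : Finset ι}

lemma Dmin_pi_single [DecidableEq ι] (Q : ι → ℝ) (i : ι) :
    Dmin (Pi.single i 1) Q = -Real.log (Q i) := by
  have h : Finset.univ.filter (fun j ↦ 0 < (Pi.single i 1 : ι → ℝ) j) = {i} := by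
    ext j
    by_cases hj : j = i <;> simp [hj]
  rw [Dmin, h, Finset.sum_singleton]

lemma Dmin_le_neg_log (hP : IsProbVec P) (hc : 0 < c) (hQ : ∀ i, c ≤ Q i) :
    Dmin P Q ≤ -Real.log c := by
  obtain ⟨i, hi⟩ := hP.exists_pos
  refine neg_le_neg (Real.log_le_log hc ((hQ i).trans ?_))
  exact Finset.single_le_sum (fun j _ ↦ hc.le.trans (hQ j)) (by simpa using hi)

lemma bddAbove_Dmin (Q : ι → ℝ) : BddAbove (Set.range fun P : ι → ℝ ↦ Dmin P Q) := by
  have h := (Set.finite_range fun s : Finset ι ↦ -Real.log (∑ i ∈ s, Q i)).bddAbove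
  refine h.mono ?_
  rintro _ ⟨P, rfl⟩
  exact ⟨_, rfl⟩

lemma le_Dmin_condVec (hP : IsProbVec P) (hQ : ∀ i, 0 < Q i) (hs : 0 < ∑ i ∈ s, P i)
    (h : ∀ i ∈ s, Real.exp a * Q i ≤ P i) : a ≤ Dmin (condVec P s) Q := by
  set S := Finset.univ.filter fun i ↦ 0 < condVec P s i
  have hS : 0 < ∑ i ∈ S, Q i := by
    obtain ⟨i, hi⟩ := (isProbVec_condVec hP.1 hs).exists_pos
    exact Finset.sum_pos (fun j _ ↦ hQ j) ⟨i, by simpa [S] using hi⟩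
  have hSs : S ⊆ s := fun i hi ↦ mem_of_condVec_pos (Finset.mem_filter.1 hi).2
  have hmass : Real.exp a * ∑ i ∈ S, Q i ≤ 1 := calc
    Real.exp a * ∑ i ∈ S, Q i = ∑ i ∈ S, Real.exp a * Q i := Finset.mul_sum ..
    _ ≤ ∑ i ∈ S, P i := Finset.sum_le_sum fun i hi ↦ h i (hSs hi)
    _ ≤ 1 := hP.sum_le_one S
  have hlog : Real.log (∑ i ∈ S, Q i) ≤ -a := by
    rwa [Real.log_le_iff_le_exp hS, Real.exp_neg, ← one_div, le_div_iff₀' (Real.exp_pos a)]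
  exact le_neg_of_le_neg hlog

lemma Dmin_le_of_traceDist_le (hP : IsProbVec P) (hP' : IsProbVec P') (hQ : ∀ i, 0 ≤ Q i)
    (hd : traceDist P' P ≤ ε) (h : ∀ i ∈ s, P i ≤ Real.exp b * Q i)
    (hs : ε < ∑ i ∈ s, P i) : Dmin P' Q ≤ b - Real.log (∑ i ∈ s, P i - ε) := by
  classical
  set S := Finset.univ.filter fun i ↦ 0 < P' i
  have hS : 1 - ε ≤ ∑ i ∈ S, P i := by
    linarith [sum_sub_sum_le_traceDist (hP'.2.trans hP.2.symm) S, hP'.sum_filter_pos]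
  have hmass : ∑ i ∈ s, P i - ε ≤ Real.exp b * ∑ i ∈ S, Q i := calc
    ∑ i ∈ s, P i - ε ≤ ∑ i ∈ S ∩ s, P i := by
      linarith [Finset.sum_union_inter (s₁ := S) (s₂ := s) (f := P), hP.sum_le_one (S ∪ s)]
    _ ≤ ∑ i ∈ S ∩ s, Real.exp b * Q i :=
      Finset.sum_le_sum fun i hi ↦ h i (Finset.mem_of_mem_inter_right hi)
    _ ≤ ∑ i ∈ S, Real.exp b * Q i :=
      Finset.sum_le_sum_of_subset_of_nonneg Finset.inter_subset_left
        fun i _ _ ↦ mul_nonneg (Real.exp_pos b).le (hQ i)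
    _ = Real.exp b * ∑ i ∈ S, Q i := (Finset.mul_sum ..).symm
  have hpos : 0 < ∑ i ∈ s, P i - ε := sub_pos.2 hs
  have hQS : 0 < ∑ i ∈ S, Q i := pos_of_mul_pos_right (hpos.trans_le hmass) (Real.exp_pos b).le
  have hlog := Real.log_le_log hpos hmass
  rw [Real.log_mul (Real.exp_pos b).ne' hQS.ne', Real.log_exp] at hlog
  change -Real.log (∑ i ∈ S, Q i) ≤ _
  linarith

end Dmin

section WeakLaw

open MeasureTheory ProbabilityTheory

variable {Ω : Type*} [MeasurableSpace Ω] {μ : Measure Ω} [IsProbabilityMeasure μ] {X : Ω → ℝ}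
  {δ : ℝ}

lemma integral_sum_pi {ι : Type*} [Fintype ι] (hX : Integrable X μ) :
    ∫ ω, ∑ k, X (ω k) ∂(Measure.pi fun _ : ι ↦ μ) = Fintype.card ι * ∫ x, X x ∂μ := by
  have hint : ∀ k : ι, Integrable (fun ω : ι → Ω ↦ X (ω k)) (Measure.pi fun _ ↦ μ) := fun k ↦
    (measurePreserving_eval _ k).integrable_comp_of_integrable hX
  have hmean : ∀ k : ι, ∫ ω, X (ω k) ∂(Measure.pi fun _ ↦ μ) = ∫ x, X x ∂μ := fun _ ↦
    integral_comp_eval (μ := fun _ ↦ μ) hX.aestronglyMeasurable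
  rw [integral_finsetSum _ fun k _ ↦ hint k]
  simp [hmean]

lemma one_sub_le_measureReal_pi_abs_sum_sub_lt (hX : MemLp X 2 μ) (hδ : 0 < δ) {n : ℕ}
    (hn : n ≠ 0) :
    1 - Var[X; μ] / δ ^ 2 / n ≤
      (Measure.pi fun _ : Fin n ↦ μ).real {ω | |∑ k, X (ω k) - n * μ[X]| < n * δ} := by
  set ν := Measure.pi fun _ : Fin n ↦ μ
  set S : (Fin n → Ω) → ℝ := ∑ k, fun ω ↦ X (ω k) with hS_def
  have hn' : (0 : ℝ) < n := by positivity
  have hXk : ∀ k : Fin n, MemLp (fun ω : Fin n → Ω ↦ X (ω k)) 2 ν := fun k ↦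
    hX.comp_measurePreserving (measurePreserving_eval _ k)
  have hS : MemLp S 2 ν := memLp_finsetSum' _ fun k _ ↦ hXk k
  have hmean : ν[S] = (n : ℝ) * μ[X] := by
    simp [hS_def, ν, integral_sum_pi (hX.integrable one_le_two)]
  have hvar : Var[S; ν] = n * Var[X; μ] := by
    simp [hS_def, ν, variance_sum_pi fun _ ↦ hX]
  have hcheb : ν.real {ω | n * δ ≤ |S ω - n * μ[X]|} ≤ Var[X; μ] / δ ^ 2 / n := by
    have h := meas_ge_le_variance_div_sq hS (mul_pos hn' hδ)
    rw [hmean, hvar] at h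
    have hcalc : n * Var[X; μ] / (n * δ) ^ 2 = Var[X; μ] / δ ^ 2 / n := by field_simp
    rw [hcalc] at h
    exact ENNReal.toReal_le_of_le_ofReal
      (div_nonneg (div_nonneg (variance_nonneg X μ) (sq_nonneg δ)) hn'.le) h
  have hcover : 1 ≤ ν.real {ω | |S ω - n * μ[X]| < n * δ} +
      ν.real {ω | n * δ ≤ |S ω - n * μ[X]|} := by
    rw [← probReal_univ (μ := ν)]
    refine (measureReal_mono fun ω _ ↦ ?_).trans (measureReal_union_le _ _)
    exact lt_or_ge |S ω - n * μ[X]| (n * δ)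
  simp only [hS_def, Finset.sum_apply] at hcover hcheb
  linarith

lemma tendsto_measureReal_pi_abs_sum_sub_lt (hX : MemLp X 2 μ) (hδ : 0 < δ) :
    Tendsto (fun n : ℕ ↦
      (Measure.pi fun _ : Fin n ↦ μ).real {ω | |∑ k, X (ω k) - n * μ[X]| < n * δ})
      atTop (𝓝 1) := by
  have hlim : Tendsto (fun n : ℕ ↦ 1 - Var[X; μ] / δ ^ 2 / n) atTop (𝓝 1) := by
    simpa using (tendsto_const_div_atTop_nhds_zero_nat (Var[X; μ] / δ ^ 2)).const_sub 1
  refine tendsto_of_tendsto_of_tendsto_of_le_of_le' hlim tendsto_const_nhds ?_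
    (.of_forall fun n ↦ measureReal_le_one)
  filter_upwards [eventually_ne_atTop 0] with n hn
  exact one_sub_le_measureReal_pi_abs_sum_sub_lt hX hδ hn

/-- A probability vector as a Mathlib `PMF`, so that the results on product measures apply to it. -/
noncomputable def IsProbVec.toPMF {ι : Type*} [Fintype ι] {P : ι → ℝ} (hP : IsProbVec P) : PMF ι :=
  PMF.ofFintype (fun i ↦ ENNReal.ofReal (P i)) <| by
    rw [← ENNReal.ofReal_sum_of_nonneg fun i _ ↦ hP.1 i, hP.2, ENNReal.ofReal_one]

lemma integral_toPMF {ι : Type*} [Fintype ι] [MeasurableSpace ι] [MeasurableSingletonClass ι]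
    {P : ι → ℝ} (hP : IsProbVec P) (h : ι → ℝ) :
    ∫ i, h i ∂hP.toPMF.toMeasure = ∑ i, P i * h i := by
  simp [PMF.integral_eq_sum, IsProbVec.toPMF, ENNReal.toReal_ofReal (hP.1 _)]

variable {d : ℕ} {p : Fin d → ℝ}

lemma measureReal_pi_toPMF (hp : IsProbVec p) {n : ℕ} (s : Finset (Fin n → Fin d)) :
    (Measure.pi fun _ : Fin n ↦ hp.toPMF.toMeasure).real s = ∑ f ∈ s, tensorPow p n f := by
  rw [← sum_measureReal_singleton]
  refine Finset.sum_congr rfl fun f _ ↦ ?_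
  simp [measureReal_def, tensorPow, IsProbVec.toPMF, ENNReal.toReal_prod,
    ENNReal.toReal_ofReal (hp.1 _)]

lemma tendsto_sum_tensorPow_abs_sum_sub_lt (hp : IsProbVec p) (h : Fin d → ℝ) (hδ : 0 < δ) :
    Tendsto (fun n : ℕ ↦
      ∑ f : Fin n → Fin d with |∑ k, h (f k) - n * ∑ i, p i * h i| < n * δ, tensorPow p n f)
      atTop (𝓝 1) := by
  have hlim := tendsto_measureReal_pi_abs_sum_sub_lt (μ := hp.toPMF.toMeasure) (X := h)
    .of_discrete hδ
  simpa only [integral_toPMF, ← measureReal_pi_toPMF hp, Finset.coe_filter, Finset.mem_univ,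
    true_and] using hlim

end WeakLaw

section TensorPow

variable {d n : ℕ} {p q : Fin d → ℝ}

lemma tensorPow_pos (hp : ∀ i, 0 < p i) (f : Fin n → Fin d) : 0 < tensorPow p n f :=
  Finset.prod_pos fun _ _ ↦ hp _

lemma isProbVec_tensorPow (hp : IsProbVec p) (n : ℕ) : IsProbVec (tensorPow p n) :=
  ⟨fun _ ↦ Finset.prod_nonneg fun _ _ ↦ hp.1 _, by
    simp only [tensorPow, ← Fintype.sum_pow, hp.2, one_pow]⟩

lemma tensorPow_eq_exp_sum_log_mul (hp : ∀ i, 0 ≤ p i) (hq : ∀ i, 0 < q i)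
    {f : Fin n → Fin d} (hf : tensorPow p n f ≠ 0) :
    tensorPow p n f = Real.exp (∑ k, Real.log (p (f k) / q (f k))) * tensorPow q n f := by
  rw [Real.exp_sum, tensorPow, tensorPow, ← Finset.prod_mul_distrib]
  refine Finset.prod_congr rfl fun k hk ↦ ?_
  have hpk : 0 < p (f k) := (hp _).lt_of_ne' (Finset.prod_ne_zero_iff.1 hf k hk)
  rw [Real.exp_log (div_pos hpk (hq _)), div_mul_cancel₀ _ (hq _).ne']

lemma renyiD_one {ι : Type*} [Fintype ι] (P Q : ι → ℝ) :
    renyiD 1 P Q = ∑ i, P i * Real.log (P i / Q i) := if_pos rfl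

open Classical in
/-- The relative typical set of the asymptotic equipartition property: the sequences whose
likelihood ratio `p^{⊗n} / q^{⊗n}` lies between `exp (n (D_1(p‖q) - δ))` and
`exp (n (D_1(p‖q) + δ))`, written without division. -/
noncomputable def typicalSet (p q : Fin d → ℝ) (n : ℕ) (δ : ℝ) : Finset (Fin n → Fin d) :=
  {f | Real.exp (n * (renyiD 1 p q - δ)) * tensorPow q n f ≤ tensorPow p n f ∧
    tensorPow p n f ≤ Real.exp (n * (renyiD 1 p q + δ)) * tensorPow q n f}

lemma mem_typicalSet_of_abs_sum_log_sub_lt (hp : ∀ i, 0 ≤ p i) (hq : ∀ i, 0 < q i)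
    {f : Fin n → Fin d} (hf : tensorPow p n f ≠ 0) {δ : ℝ}
    (h : |∑ k, Real.log (p (f k) / q (f k)) - n * renyiD 1 p q| < n * δ) :
    f ∈ typicalSet p q n δ := by
  have hQ := (tensorPow_pos (n := n) hq f).le
  obtain ⟨hlow, hupp⟩ := abs_lt.1 h
  rw [typicalSet, Finset.mem_filter_univ, tensorPow_eq_exp_sum_log_mul hp hq hf]
  constructor <;> gcongr <;> linarith

lemma tendsto_sum_typicalSet (hp : IsProbVec p) (hq : ∀ i, 0 < q i) {δ : ℝ} (hδ : 0 < δ) :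
    Tendsto (fun n ↦ ∑ f ∈ typicalSet p q n δ, tensorPow p n f) atTop (𝓝 1) := by
  classical
  refine tendsto_of_tendsto_of_tendsto_of_le_of_le
    (tendsto_sum_tensorPow_abs_sum_sub_lt hp (fun i ↦ Real.log (p i / q i)) hδ)
    tendsto_const_nhds (fun n ↦ ?_) fun n ↦ (isProbVec_tensorPow hp n).sum_le_one _
  dsimp only
  rw [← renyiD_one, ← Finset.sum_filter_ne_zero]
  refine Finset.sum_le_sum_of_subset_of_nonneg (fun f hf ↦ ?_) fun f _ _ ↦
    (isProbVec_tensorPow hp n).1 f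
  simp only [Finset.mem_filter, Finset.mem_univ, true_and] at hf
  exact mem_typicalSet_of_abs_sum_log_sub_lt hp.1 hq hf.2 hf.1

end TensorPow

section DminSmooth

variable {d n : ℕ} {p q : Fin d → ℝ} {ε δ b : ℝ}

lemma Dmin_le_DminSmooth {P : (Fin n → Fin d) → ℝ} (hP : IsProbVec P)
    (hd : traceDist P (tensorPow p n) ≤ ε) : Dmin P (tensorPow q n) ≤ DminSmooth ε n p q := by
  refine le_csSup ((bddAbove_Dmin (tensorPow q n)).mono ?_) ⟨P, hP, hd, rfl⟩
  rintro _ ⟨P', -, -, rfl⟩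
  exact ⟨P', rfl⟩

lemma DminSmooth_le (hp : IsProbVec p) (hε : 0 ≤ ε)
    (h : ∀ P, IsProbVec P → traceDist P (tensorPow p n) ≤ ε → Dmin P (tensorPow q n) ≤ b) :
    DminSmooth ε n p q ≤ b := by
  refine csSup_le ⟨_, _, isProbVec_tensorPow hp n, (traceDist_self _).trans_le hε, rfl⟩ ?_
  rintro _ ⟨P, hP, hd, rfl⟩
  exact h P hP hd

lemma eventually_mul_le_DminSmooth (hp : IsProbVec p) (hq : ∀ i, 0 < q i) (hε : 0 < ε)
    (hδ : 0 < δ) : ∀ᶠ n : ℕ in atTop, n * (renyiD 1 p q - δ) ≤ DminSmooth ε n p q := by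
  have hmass := (tendsto_sum_typicalSet hp hq hδ).eventually
    (lt_mem_nhds (max_lt (sub_lt_self 1 hε) zero_lt_one))
  filter_upwards [hmass] with n hn
  obtain ⟨hclose, hpos⟩ := max_lt_iff.1 hn
  have hP := isProbVec_tensorPow hp n
  calc n * (renyiD 1 p q - δ)
      ≤ Dmin (condVec (tensorPow p n) (typicalSet p q n δ)) (tensorPow q n) :=
        le_Dmin_condVec hP (tensorPow_pos hq) hpos fun f hf ↦ (Finset.mem_filter.1 hf).2.1
    _ ≤ DminSmooth ε n p q := Dmin_le_DminSmooth (isProbVec_condVec hP.1 hpos) <| by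
        rw [traceDist_condVec hP hpos]
        linarith

lemma eventually_DminSmooth_le (hp : IsProbVec p) (hq : ∀ i, 0 < q i) (hε : 0 ≤ ε) (hε1 : ε < 1)
    (hδ : 0 < δ) : ∀ᶠ n : ℕ in atTop,
      DminSmooth ε n p q ≤ n * (renyiD 1 p q + δ) - Real.log ((1 - ε) / 2) := by
  have hmass := (tendsto_sum_typicalSet hp hq hδ).eventually
    (lt_mem_nhds (show (1 + ε) / 2 < 1 by linarith))
  filter_upwards [hmass] with n hn
  refine DminSmooth_le hp hε fun P hP hd ↦ ?_
  calc Dmin P (tensorPow q n)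
      ≤ n * (renyiD 1 p q + δ) -
          Real.log (∑ f ∈ typicalSet p q n δ, tensorPow p n f - ε) :=
        Dmin_le_of_traceDist_le (isProbVec_tensorPow hp n) hP (fun f ↦ (tensorPow_pos hq f).le) hd
          (fun f hf ↦ (Finset.mem_filter.1 hf).2.2) (by linarith)
    _ ≤ n * (renyiD 1 p q + δ) - Real.log ((1 - ε) / 2) := by
        gcongr
        all_goals linarith

theorem tendsto_DminSmooth_div_of_lt_one (hp : IsProbVec p) (hq : ∀ i, 0 < q i) (hε : 0 < ε)
    (hε1 : ε < 1) :
    Tendsto (fun n : ℕ ↦ DminSmooth ε n p q / n) atTop (𝓝 (renyiD 1 p q)) := by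
  refine tendsto_order.2 ⟨fun a ha ↦ ?_, fun b hb ↦ ?_⟩
  · obtain ⟨δ, hδ, haδ⟩ : ∃ δ > 0, a < renyiD 1 p q - δ :=
      ⟨(renyiD 1 p q - a) / 2, by linarith, by linarith⟩
    filter_upwards [eventually_mul_le_DminSmooth hp hq hε hδ, eventually_gt_atTop 0] with n h hn
    have hn' : (0 : ℝ) < n := Nat.cast_pos.2 hn
    exact haδ.trans_le ((le_div_iff₀' hn').2 h)
  · obtain ⟨δ, hδ, hbδ⟩ : ∃ δ > 0, renyiD 1 p q + δ < b :=
      ⟨(b - renyiD 1 p q) / 2, by linarith, by linarith⟩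
    have hlim : Tendsto (fun n : ℕ ↦ renyiD 1 p q + δ - Real.log ((1 - ε) / 2) / n) atTop
        (𝓝 (renyiD 1 p q + δ)) := by
      simpa using (tendsto_const_div_atTop_nhds_zero_nat (Real.log ((1 - ε) / 2))).const_sub
        (renyiD 1 p q + δ)
    filter_upwards [eventually_DminSmooth_le hp hq hε.le hε1 hδ, eventually_gt_atTop 0,
      hlim.eventually (gt_mem_nhds hbδ)] with n h hn hlt
    have hn' : (0 : ℝ) < n := Nat.cast_pos.2 hn
    refine lt_of_le_of_lt ?_ hlt
    rw [div_le_iff₀ hn', sub_mul, div_mul_cancel₀ _ hn'.ne']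
    linarith

lemma DminSmooth_of_one_le (hp : IsProbVec p) (hε : 1 ≤ ε) {m : Fin d} (hm : 0 < q m)
    (hmin : ∀ i, q m ≤ q i) (n : ℕ) : DminSmooth ε n p q = n * -Real.log (q m) := by
  have hlog : n * -Real.log (q m) = -Real.log (q m ^ n) := by rw [Real.log_pow, mul_neg]
  rw [hlog]
  refine le_antisymm (DminSmooth_le hp (zero_le_one.trans hε) fun P hP _ ↦ ?_) ?_
  · refine Dmin_le_neg_log hP (pow_pos hm n) fun f ↦ ?_
    calc q m ^ n = ∏ _k : Fin n, q m := by simp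
      _ ≤ tensorPow q n f := Finset.prod_le_prod (fun _ _ ↦ hm.le) fun k _ ↦ hmin (f k)
  · have hP := isProbVec_pi_single fun _ : Fin n ↦ m
    calc -Real.log (q m ^ n) = Dmin (Pi.single (fun _ ↦ m) 1) (tensorPow q n) := by
          simp [Dmin_pi_single, tensorPow]
      _ ≤ DminSmooth ε n p q :=
          Dmin_le_DminSmooth hP ((traceDist_le_one hP (isProbVec_tensorPow hp n)).trans hε)

theorem tendsto_DminSmooth_div_of_one_le (hp : IsProbVec p) (hε : 1 ≤ ε) {m : Fin d}
    (hm : 0 < q m) (hmin : ∀ i, q m ≤ q i) :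
    Tendsto (fun n : ℕ ↦ DminSmooth ε n p q / n) atTop (𝓝 (-Real.log (q m))) := by
  refine tendsto_const_nhds.congr' ?_
  filter_upwards [eventually_ne_atTop 0] with n hn
  rw [DminSmooth_of_one_le hp hε hm hmin, mul_div_cancel_left₀ _ (Nat.cast_ne_zero.2 hn)]

end DminSmooth

theorem smoothed_Dmin_iid_limit_general {d : ℕ} (p q : Fin d → ℝ) (hp : IsProbVec p)
    (hqpos : ∀ i, 0 < q i) :
    ∃ L : ℝ → ℝ,
      (∀ ε : ℝ, 0 < ε →
        Tendsto (fun n : ℕ ↦ DminSmooth ε n p q / (n : ℝ)) atTop (𝓝 (L ε))) ∧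
      Tendsto L (𝓝[>] (0 : ℝ)) (𝓝 (∑ i, p i * Real.log (p i / q i))) := by
  have := hp.nonempty
  obtain ⟨m, hmin⟩ := Finite.exists_min q
  refine ⟨fun ε ↦ if ε < 1 then renyiD 1 p q else -Real.log (q m), fun ε hε ↦ ?_, ?_⟩
  · dsimp only
    split_ifs with hε1
    · exact tendsto_DminSmooth_div_of_lt_one hp hqpos hε hε1
    · exact tendsto_DminSmooth_div_of_one_le hp (not_lt.1 hε1) (hqpos m) hmin
  · rw [← renyiD_one]
    refine tendsto_const_nhds.congr' ?_
    filter_upwards [Ioo_mem_nhdsGT one_pos] with ε hε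
    rw [if_pos hε.2]

/-- **Asymptotic equipartition for the smoothed min-divergence (Eq. (30), `α = 0`;
Stein's lemma).** `lim_{ε→0⁺} lim_{n→∞} (1/n) D_0^ε(p^{⊗n}‖q^{⊗n}) = D_1(p‖q)`. -/
theorem smoothed_Dmin_iid_limit {d : ℕ} (p q : Fin d → ℝ)
    (hp : IsProbVec p) (hq : IsProbVec q)
    (hppos : ∀ i, 0 < p i) (hqpos : ∀ i, 0 < q i) :
    ∃ L : ℝ → ℝ,
      (∀ ε : ℝ, 0 < ε →
        Filter.Tendsto (fun n : ℕ => DminSmooth ε n p q / (n : ℝ))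
          Filter.atTop (𝓝 (L ε))) ∧
      Filter.Tendsto L (𝓝[>] (0 : ℝ)) (𝓝 (∑ i, p i * Real.log (p i / q i))) :=
  smoothed_Dmin_iid_limit_general p q hp hqpos
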